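/- arXiv:2006.13333 — 2 statements merged into one kernel-verified Lean document; each statement's English description precedes it below -/
import Mathlib

section
/- Let A ∈ ℝ^{n×n} be symmetric and strictly k-positive, where 1 ≤ k ≤ n, and let λ₁, …, λ_n be its (real) eigenvalues, counted with multiplicity and ordered so that |λ₁| ≥ |λ₂| ≥ … ≥ |λ_n|. Then the k largest-in-modulus eigenvalues are positive and simple: λ₁ > λ₂ > … > λ_k > 0, and λ_k > |λ_i| for every i > k. -/
open Matrix Polynomial

/-- A matrix is strictly `k`-positive if all its minors of order at most `k`
(taken with strictly increasing row and column indices) are positive. -/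
def IsStrictlyKPositive {m n : ℕ} (X : Matrix (Fin m) (Fin n) ℝ) (k : ℕ) : Prop :=
  ∀ p : ℕ, 1 ≤ p → p ≤ k → ∀ r : Fin p → Fin m, ∀ c : Fin p → Fin n,
    StrictMono r → StrictMono c → 0 < (X.submatrix r c).det

/-- An entrywise positive matrix orthogonally diagonalized as `W * diagonal μ * Wᵀ`: a column of
`W` belonging to an eigenvalue of maximal modulus has entries of one strict sign, and that
eigenvalue is positive. -/
theorem pos_and_sameSign_of_abs_eigenvalue_max {ι : Type*} [Fintype ι] [DecidableEq ι]
    {M W : Matrix ι ι ℝ} {μ : ι → ℝ} (hW : W * Wᵀ = 1) (hM : M = W * diagonal μ * Wᵀ)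
    (hpos : ∀ i j, 0 < M i j) {s : ι} (hmax : ∀ t, |μ t| ≤ |μ s|) :
    0 < μ s ∧ ∀ i j, 0 < W i s * W j s := by
  have hW' : Wᵀ * W = 1 := mul_eq_one_comm.mp hW
  set v : ι → ℝ := fun i => |W i s| with hv
  have hMW : M * W = W * diagonal μ := by
    rw [hM, Matrix.mul_assoc, hW', Matrix.mul_one]
  have heig (i : ι) : ∑ j, M i j * W j s = μ s * W i s := by
    have := congrFun (congrFun hMW i) s
    rw [Matrix.mul_apply, Matrix.mul_diagonal] at this
    rw [this, mul_comm]
  have hnorm : ∑ i, W i s * W i s = 1 := by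
    simpa [Matrix.mul_apply] using congrFun (congrFun hW' s) s
  have hquad : ∑ i, ∑ j, M i j * (W i s * W j s) = μ s := by
    calc _ = ∑ i, W i s * ∑ j, M i j * W j s := by
          simp only [Finset.mul_sum]
          exact Finset.sum_congr rfl fun i _ => Finset.sum_congr rfl fun j _ => by ring
      _ = μ s * ∑ i, W i s * W i s := by
          rw [Finset.mul_sum]
          exact Finset.sum_congr rfl fun i _ => by rw [heig]; ring
      _ = μ s := by rw [hnorm, mul_one]
  have hle : |μ s| ≤ ∑ i, ∑ j, M i j * (v i * v j) := by
    conv_lhs => rw [← hquad]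
    refine (Finset.abs_sum_le_sum_abs _ _).trans (Finset.sum_le_sum fun i _ => ?_)
    refine (Finset.abs_sum_le_sum_abs _ _).trans (Finset.sum_le_sum fun j _ => ?_)
    rw [abs_mul, abs_mul, abs_of_pos (hpos i j)]
  set y : ι → ℝ := Wᵀ *ᵥ v with hy
  have hWy : W *ᵥ y = v := by rw [hy, mulVec_mulVec, hW, one_mulVec]
  have hyy : ∑ t, y t * y t = 1 := by
    have h1 : y ⬝ᵥ y = v ⬝ᵥ v := by
      conv_lhs => rw [hy, mulVec_transpose, ← dotProduct_mulVec, ← mulVec_transpose, ← hy, hWy]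
    have h2 : v ⬝ᵥ v = 1 := by
      rw [← hnorm]
      exact Finset.sum_congr rfl fun i _ => abs_mul_abs_self _
    exact h1.trans h2
  have hMv : M *ᵥ v = W *ᵥ (fun t => μ t * y t) := by
    rw [hM, Matrix.mul_assoc, ← mulVec_mulVec, ← mulVec_mulVec, ← hy]
    congr 1
    ext t
    rw [mulVec_diagonal]
  have hvMv : ∑ i, ∑ j, M i j * (v i * v j) = ∑ t, μ t * (y t * y t) := by
    calc _ = v ⬝ᵥ (M *ᵥ v) := by
          simp only [dotProduct, mulVec, Finset.mul_sum]
          exact Finset.sum_congr rfl fun i _ => Finset.sum_congr rfl fun j _ => by ring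
      _ = y ⬝ᵥ (fun t => μ t * y t) := by
          rw [hMv, dotProduct_mulVec, ← mulVec_transpose]
      _ = _ := Finset.sum_congr rfl fun t _ => by ring
  have hgap (t : ι) : 0 ≤ (|μ s| - μ t) * (y t * y t) :=
    mul_nonneg (sub_nonneg.mpr ((le_abs_self _).trans (hmax t))) (mul_self_nonneg _)
  have hgapsum : ∑ t, (|μ s| - μ t) * (y t * y t) = |μ s| - ∑ t, μ t * (y t * y t) := by
    simp only [sub_mul, Finset.sum_sub_distrib, ← Finset.mul_sum, hyy, mul_one]
  have hgap0 : ∑ t, (|μ s| - μ t) * (y t * y t) = 0 :=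
    le_antisymm (by rw [hgapsum, ← hvMv]; linarith) (Finset.sum_nonneg fun t _ => hgap t)
  have hquadv : ∑ i, ∑ j, M i j * (v i * v j) = |μ s| := by linarith
  have hμy (t : ι) : μ t * y t = |μ s| * y t := by
    have h := (Finset.sum_eq_zero_iff_of_nonneg fun t _ => hgap t).mp hgap0 t (Finset.mem_univ t)
    rcases mul_eq_zero.mp h with h | h
    · rw [sub_eq_zero.mp h]
    · simp [mul_self_eq_zero.mp h]
  have heigv (i : ι) : ∑ j, M i j * v j = |μ s| * v i := by
    have h : M *ᵥ v = |μ s| • v := by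
      rw [hMv, ← hWy, ← mulVec_smul]
      congr 1
      ext t
      exact hμy t
    exact congrFun h i
  have hv0 : ∃ i, 0 < v i := by
    by_contra! h
    have h0 (i : ι) : W i s = 0 := abs_eq_zero.mp (le_antisymm (h i) (abs_nonneg _))
    simp [h0] at hnorm
  obtain ⟨i₀, hi₀⟩ := hv0
  have hpos' (i : ι) : 0 < |μ s| * v i := by
    rw [← heigv]
    exact Finset.sum_pos' (fun j _ => mul_nonneg (hpos i j).le (abs_nonneg _))
      ⟨i₀, Finset.mem_univ _, mul_pos (hpos i i₀) hi₀⟩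
  have hvpos (i : ι) : 0 < v i := pos_of_mul_pos_right (hpos' i) (abs_nonneg _)
  have hzero {ε : ℝ} (hε : |ε| = 1) (hs : ε * μ s = |μ s|) (i j : ι) :
      v i * v j = ε * (W i s * W j s) := by
    have hnn (i j : ι) : 0 ≤ M i j * (v i * v j - ε * (W i s * W j s)) := by
      refine mul_nonneg (hpos i j).le (sub_nonneg.mpr ((le_abs_self _).trans ?_))
      rw [abs_mul, hε, one_mul, abs_mul]
    have hsum : ∑ i, ∑ j, M i j * (v i * v j - ε * (W i s * W j s)) = 0 := by
      calc _ = ∑ i, ∑ j, M i j * (v i * v j) - ε * ∑ i, ∑ j, M i j * (W i s * W j s) := by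
            simp only [Finset.mul_sum, ← Finset.sum_sub_distrib]
            exact Finset.sum_congr rfl fun i _ => Finset.sum_congr rfl fun j _ => by ring
        _ = 0 := by rw [hquadv, hquad, hs, sub_self]
    have h1 := (Finset.sum_eq_zero_iff_of_nonneg
      fun i _ => Finset.sum_nonneg fun j _ => hnn i j).mp hsum i (Finset.mem_univ i)
    have h2 := (Finset.sum_eq_zero_iff_of_nonneg fun j _ => hnn i j).mp h1 j (Finset.mem_univ j)
    exact sub_eq_zero.mp ((mul_eq_zero.mp h2).resolve_left (hpos i j).ne')
  have hμpos : 0 < μ s := by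
    by_contra! hneg
    have h := hzero (ε := -1) (by simp) (by rw [abs_of_nonpos hneg]; ring) s s
    nlinarith [mul_pos (hvpos s) (hvpos s), mul_self_nonneg (W s s)]
  refine ⟨hμpos, fun i j => ?_⟩
  have h := hzero (ε := 1) (by simp) (by rw [abs_of_pos hμpos, one_mul]) i j
  rw [one_mul] at h
  exact h ▸ mul_pos (hvpos i) (hvpos j)

/-- **Perron's theorem** for symmetric matrices: an eigenvalue of maximal modulus of an entrywise
positive, orthogonally diagonalized matrix is positive and strictly dominates all the others. -/
theorem perron_of_orthogonal_diagonalization {ι : Type*} [Fintype ι] [DecidableEq ι]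
    {M W : Matrix ι ι ℝ} {μ : ι → ℝ} (hW : W * Wᵀ = 1) (hM : M = W * diagonal μ * Wᵀ)
    (hpos : ∀ i j, 0 < M i j) {s : ι} (hmax : ∀ t, |μ t| ≤ |μ s|) :
    0 < μ s ∧ ∀ t, t ≠ s → |μ t| < μ s := by
  obtain ⟨hs, hsign⟩ := pos_and_sameSign_of_abs_eigenvalue_max hW hM hpos hmax
  refine ⟨hs, fun t hts => ?_⟩
  have hle := hmax t
  rw [abs_of_pos hs] at hle
  refine lt_of_le_of_ne hle fun heq => ?_
  have hmax' (u : ι) : |μ u| ≤ |μ t| := by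
    rw [heq, ← abs_of_pos hs]
    exact hmax u
  obtain ⟨-, hsign'⟩ := pos_and_sameSign_of_abs_eigenvalue_max hW hM hpos hmax'
  have hW' : Wᵀ * W = 1 := mul_eq_one_comm.mp hW
  have horth : ∑ i, W i t * W i s = 0 := by
    simpa [Matrix.mul_apply, hts] using congrFun (congrFun hW' t) s
  have hgt : 0 < ∑ i, W s t * W s s * (W i t * W i s) :=
    Finset.sum_pos (fun i _ => by nlinarith [mul_pos (hsign s i) (hsign' s i)])
      ⟨s, Finset.mem_univ s⟩
  rw [← Finset.mul_sum, horth, mul_zero] at hgt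
  exact hgt.false

open Set in
/-- The `p`-th compound matrix: the matrix of the minors of order `p`. -/
def compound {R : Type*} [CommRing R] {n : ℕ} (p : ℕ) (A : Matrix (Fin n) (Fin n) R) :
    Matrix (powersetCard (Fin n) p) (powersetCard (Fin n) p) R :=
  .of fun s t => (A.submatrix (powersetCard.ofFinEmbEquiv.symm s)
    (powersetCard.ofFinEmbEquiv.symm t)).det

section Compound

open Set

variable {R : Type*} [CommRing R] {n : ℕ} (p : ℕ)

theorem compound_apply (A : Matrix (Fin n) (Fin n) R) (s t : powersetCard (Fin n) p) :
    compound p A s t = (A.submatrix (powersetCard.ofFinEmbEquiv.symm s)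
      (powersetCard.ofFinEmbEquiv.symm t)).det := rfl

theorem compound_eq_toMatrix (A : Matrix (Fin n) (Fin n) R) :
    compound p A = LinearMap.toMatrix ((Pi.basisFun R (Fin n)).exteriorPower p)
      ((Pi.basisFun R (Fin n)).exteriorPower p) (exteriorPower.map p (toLin' A)) := by
  ext s t
  rw [LinearMap.toMatrix_apply, exteriorPower.basis_repr_apply, exteriorPower.basis_apply,
    exteriorPower.map_apply_ιMulti_family, exteriorPower.ιMulti_family,
    exteriorPower.ιMultiDual_apply_ιMulti, compound_apply, ← det_transpose]
  congr 1
  ext i j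
  simp

/-- The **Cauchy–Binet formula**. -/
theorem compound_mul (A B : Matrix (Fin n) (Fin n) R) :
    compound p (A * B) = compound p A * compound p B := by
  rw [compound_eq_toMatrix, compound_eq_toMatrix, compound_eq_toMatrix, toLin'_mul,
    exteriorPower.map_comp, LinearMap.toMatrix_comp _ ((Pi.basisFun R (Fin n)).exteriorPower p)]

theorem compound_transpose (A : Matrix (Fin n) (Fin n) R) :
    compound p Aᵀ = (compound p A)ᵀ := by
  ext s t
  rw [transpose_apply, compound_apply, compound_apply, ← det_transpose, transpose_submatrix,
    transpose_transpose]

theorem compound_one : compound p (1 : Matrix (Fin n) (Fin n) R) = 1 := by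
  rw [compound_eq_toMatrix, toLin'_one, exteriorPower.map_id, LinearMap.toMatrix_id]

theorem compound_diagonal (d : Fin n → R) :
    compound p (diagonal d) =
      diagonal fun s => ∏ i, d (powersetCard.ofFinEmbEquiv.symm s i) := by
  ext s t
  rw [compound_apply]
  rcases eq_or_ne s t with rfl | hst
  · rw [diagonal_apply_eq, submatrix_diagonal d _
      (powersetCard.ofFinEmbEquiv.symm s).injective, det_diagonal]
    rfl
  · rw [diagonal_apply_ne _ hst]
    obtain ⟨i, his, hit⟩ := (powersetCard.exists_mem_notMem_iff_ne s t).mp hst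
    obtain ⟨k, rfl⟩ := (powersetCard.mem_range_ofFinEmbEquiv_symm_iff_mem s i).mpr his
    refine det_eq_zero_of_row_eq_zero k fun j => diagonal_apply_ne _ fun h => hit ?_
    rw [h]
    exact (powersetCard.mem_range_ofFinEmbEquiv_symm_iff_mem t _).mp ⟨j, rfl⟩

end Compound

/-- A real symmetric matrix is orthogonally diagonalizable, with the roots of the characteristic
polynomial on the diagonal in any prescribed order. -/
theorem exists_orthogonal_diagonalization {ι : Type*} [Fintype ι] [DecidableEq ι]
    {A : Matrix ι ι ℝ} (hA : A.IsSymm) {lam : ι → ℝ}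
    (hspec : A.charpoly = ∏ i, (X - C (lam i))) :
    ∃ U : Matrix ι ι ℝ, U * Uᵀ = 1 ∧ A = U * diagonal lam * Uᵀ := by
  have hH : A.IsHermitian := by rwa [IsHermitian, conjTranspose_eq_transpose_of_trivial]
  have hroots : Multiset.map lam Finset.univ.val = Multiset.map hH.eigenvalues Finset.univ.val := by
    have h1 : A.charpoly.roots = Multiset.map lam Finset.univ.val := by
      rw [hspec, ← roots_multiset_prod_X_sub_C (Multiset.map lam Finset.univ.val),
        Multiset.map_map]
      rfl
    rw [← h1, hH.roots_charpoly_eq_eigenvalues]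
    rfl
  obtain ⟨σ, hσ⟩ : ∃ σ : Equiv.Perm ι, hH.eigenvalues ∘ σ = lam := by
    have hcard (c : ℝ) : Fintype.card {i // lam i = c} =
        Fintype.card {i // hH.eigenvalues i = c} := by
      have h := congrArg (Multiset.count c) hroots
      rw [Multiset.count_map, Multiset.count_map] at h
      rw [Fintype.card_subtype, Fintype.card_subtype]
      simpa only [Finset.card_def, Finset.filter_val, eq_comm] using h
    exact ⟨Equiv.ofFiberEquiv fun c => Fintype.equivOfCardEq (hcard c),
      funext fun i => Equiv.ofFiberEquiv_map _ i⟩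
  set V : Matrix ι ι ℝ := (hH.eigenvectorUnitary : Matrix ι ι ℝ)
  have hVV : V * Vᵀ = 1 := by
    have := Unitary.coe_mul_star_self hH.eigenvectorUnitary
    rwa [Unitary.coe_star, star_eq_conjTranspose, conjTranspose_eq_transpose_of_trivial] at this
  have hVA : A = V * diagonal hH.eigenvalues * Vᵀ := by
    have := hH.spectral_theorem
    rwa [Unitary.conjStarAlgAut_apply, star_eq_conjTranspose,
      conjTranspose_eq_transpose_of_trivial] at this
  refine ⟨V.submatrix id σ, ?_, ?_⟩
  · rw [transpose_submatrix, submatrix_mul_equiv, hVV, submatrix_id_id]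
  · rw [← hσ, ← submatrix_diagonal_equiv, submatrix_mul_equiv, transpose_submatrix,
      submatrix_mul_equiv, ← hVA, submatrix_id_id]

open Set in
/-- If the minors of order `p` of a symmetric matrix are positive and its eigenvalues are ordered
by decreasing modulus, then the product of the first `p` eigenvalues is positive and strictly
dominates every other product of `p` eigenvalues. -/
theorem prod_eigenvalues_pos_and_dominant {n p : ℕ} (hpn : p ≤ n)
    {A : Matrix (Fin n) (Fin n) ℝ} (hsymm : A.IsSymm)
    (hA : ∀ r c : Fin p → Fin n, StrictMono r → StrictMono c → 0 < (A.submatrix r c).det)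
    {lam : Fin n → ℝ} (hspec : A.charpoly = ∏ i, (X - C (lam i)))
    (hord : ∀ i j : Fin n, i ≤ j → |lam j| ≤ |lam i|) :
    0 < ∏ i : Fin p, lam (i.castLE hpn) ∧
      ∀ f : Fin p ↪o Fin n, f ≠ Fin.castLEOrderEmb hpn →
        |∏ i, lam (f i)| < ∏ i : Fin p, lam (i.castLE hpn) := by
  obtain ⟨U, hU, hAU⟩ := exists_orthogonal_diagonalization hsymm hspec
  have hW : compound p U * (compound p U)ᵀ = 1 := by
    rw [← compound_transpose, ← compound_mul, hU, compound_one]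
  have hM : compound p A = compound p U *
      diagonal (fun s => ∏ i, lam (powersetCard.ofFinEmbEquiv.symm s i)) * (compound p U)ᵀ := by
    rw [← compound_transpose, ← compound_diagonal, ← compound_mul, ← compound_mul, ← hAU]
  have hle (f : Fin p ↪o Fin n) (i : Fin p) : i.castLE hpn ≤ f i := by
    obtain ⟨i, hi⟩ := i
    induction i with
    | zero => exact Nat.zero_le _
    | succ i ih =>
      have h : f ⟨i, by lia⟩ < f ⟨i + 1, hi⟩ := f.strictMono (Nat.lt_succ_self i)
      exact Nat.succ_le_of_lt (lt_of_le_of_lt (ih (by lia)) h)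
  have hperron := perron_of_orthogonal_diagonalization hW hM
    (fun s t => hA _ _ (OrderEmbedding.strictMono _) (OrderEmbedding.strictMono _))
    (s := powersetCard.ofFinEmbEquiv (Fin.castLEOrderEmb hpn)) (fun t => by
      simp only [Equiv.symm_apply_apply, Finset.abs_prod]
      exact Finset.prod_le_prod (fun i _ => abs_nonneg _) fun i _ => hord _ _ (hle _ i))
  simp only [Equiv.symm_apply_apply] at hperron
  refine ⟨hperron.1, fun f hf => ?_⟩
  have h := hperron.2 (powersetCard.ofFinEmbEquiv f) (by simpa using hf)
  rwa [Equiv.symm_apply_apply] at h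

/-- For a symmetric strictly `k`-positive matrix with eigenvalues
`lam 0, …, lam (n-1)` (counted with multiplicity, i.e. the characteristic
polynomial splits as `∏ (X - lam i)`), ordered by decreasing modulus,
the `k` largest-in-modulus eigenvalues are positive and simple, and the
`k`-th one strictly dominates the modulus of all subsequent eigenvalues. -/
theorem symm_strictly_kpositive_eigenvalues
    {n k : ℕ} (hk1 : 1 ≤ k) (hkn : k ≤ n)
    (A : Matrix (Fin n) (Fin n) ℝ) (hsymm : A.IsSymm)
    (hA : IsStrictlyKPositive A k)
    (lam : Fin n → ℝ)
    (hspec : A.charpoly = ∏ i, (X - C (lam i)))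
    (hord : ∀ i j : Fin n, i ≤ j → |lam j| ≤ |lam i|) :
    (∀ i j : Fin n, i < j → (j : ℕ) < k → lam j < lam i) ∧
    (∀ i : Fin n, (i : ℕ) < k → 0 < lam i) ∧
    (∀ i : Fin n, k ≤ (i : ℕ) → ∀ j : Fin n, (j : ℕ) + 1 = k → |lam i| < lam j) := by
  have hprod (p : ℕ) (hp : p ≤ k) : 0 < ∏ i : Fin p, lam (i.castLE (hp.trans hkn)) := by
    rcases Nat.eq_zero_or_pos p with rfl | hp0
    · simp
    · exact (prod_eigenvalues_pos_and_dominant (hp.trans hkn) hsymm (hA p hp0 hp) hspec hord).1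
  have hpos (i : Fin n) (hi : (i : ℕ) < k) : 0 < lam i := by
    have h := hprod (i + 1) hi
    rw [Fin.prod_univ_castSucc] at h
    exact pos_of_mul_pos_right h (hprod i hi.le).le
  have hstep (i j : Fin n) (hi : (i : ℕ) < k) (hij : i < j) : |lam j| < lam i := by
    have hin : (i : ℕ) + 1 ≤ n := i.isLt
    let f : Fin (i + 1) ↪o Fin n :=
      OrderEmbedding.ofStrictMono (fun a => if (a : ℕ) = i then j else a.castLE hin) (by
        intro a b hab
        have := a.isLt
        have := b.isLt
        simp only [Fin.lt_def] at hab hij ⊢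
        split_ifs <;> first | exact hab | lia | (rw [Fin.val_castLE]; lia))
    have hlast : f (Fin.last i) = j := if_pos rfl
    have hf : f ≠ Fin.castLEOrderEmb hin := by
      intro h
      have h' : f (Fin.last i) = i := by rw [h]; rfl
      exact hij.ne (h'.symm.trans hlast)
    have h := (prod_eigenvalues_pos_and_dominant hin hsymm
      (hA (i + 1) (Nat.le_add_left 1 i) hi) hspec hord).2 f hf
    have hcast (a : Fin i) : f a.castSucc = a.castLE i.isLt.le := if_neg a.isLt.ne
    rw [Fin.prod_univ_castSucc, Fin.prod_univ_castSucc, hlast, abs_mul] at h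
    simp only [hcast] at h
    rw [abs_of_pos (hprod i hi.le)] at h
    exact lt_of_mul_lt_mul_left h (hprod i hi.le).le
  exact ⟨fun i j hij hj => (le_abs_self _).trans_lt (hstep i j (lt_trans hij hj) hij), hpos,
    fun i hi j hj => hstep j i (by lia) (Fin.lt_def.mpr (by lia))⟩
end

section
/- Let g : {1,2,…} → ℝ be a sequence whose Hankel matrix H(g) has finite rank r ≥ 1. Then H(g) is totally positive (every minor of every finite submatrix of H(g) is nonnegative) if and only if there exist coefficients c₁, …, c_r > 0 and values λ₁ > λ₂ > … > λ_r ≥ 0 such that g(t) = Σ_{i=1}^{r} c_i λ_i^{t−1} for all t ≥ 1. -/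
open Matrix

/-- The square submatrix of the infinite Hankel matrix `H(g)_{i,j} = g(i+j-1)`
(`i,j ≥ 1`) obtained from rows `ρ` and columns `c`.  Here the sequence is
indexed from `0`, i.e. `g t` stands for the value of the impulse response at
time `t + 1`, so that `H(g)` has `(i,j)`-entry `g (i + j)` for `i, j ≥ 0`. -/
def hankelSub (g : ℕ → ℝ) {p : ℕ} (ρ c : Fin p → ℕ) : Matrix (Fin p) (Fin p) ℝ :=
  Matrix.of fun i j => g (ρ i + c j)

/-- The infinite Hankel matrix `H(g)` is totally positive: every minor of every
finite submatrix is nonnegative. -/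
def HankelTotallyPositive (g : ℕ → ℝ) : Prop :=
  ∀ (p : ℕ) (ρ c : Fin p → ℕ), StrictMono ρ → StrictMono c →
    0 ≤ (hankelSub g ρ c).det

/-- The infinite Hankel matrix `H(g)` has rank exactly `r`: all of its finite
submatrices have rank at most `r` and some finite submatrix has rank `r`. -/
def HankelRankEq (g : ℕ → ℝ) (r : ℕ) : Prop :=
  (∀ (p : ℕ) (ρ c : Fin p → ℕ), (hankelSub g ρ c).rank ≤ r) ∧
  (∃ ρ c : Fin r → ℕ, (hankelSub g ρ c).rank = r)


open Polynomial in
theorem Matrix.posSemidef_of_det_submatrix_nonneg {n : Type*} [Fintype n] [DecidableEq n]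
    {M : Matrix n n ℝ} (hM : M.IsHermitian)
    (h : ∀ s : Finset n, 0 ≤ (M.submatrix (Subtype.val : s → n) Subtype.val).det) :
    M.PosSemidef := by
  rw [hM.posSemidef_iff_eigenvalues_nonneg]
  intro i
  by_contra hneg
  set μ := hM.eigenvalues i
  have hμ : 0 < -μ := by simpa using hneg
  have hroot : M.charpoly.eval μ = 0 := by
    rw [hM.charpoly_eq, eval_prod]
    exact Finset.prod_eq_zero (Finset.mem_univ i) (by simp [μ])
  rw [eval_eq_sum_range, M.charpoly_natDegree_eq_dim, ← Finset.sum_range_reflect] at hroot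
  have hterm : ∀ k ∈ Finset.range (Fintype.card n + 1),
      M.charpoly.coeff (Fintype.card n + 1 - 1 - k) * μ ^ (Fintype.card n + 1 - 1 - k) =
      (-1) ^ Fintype.card n * ((∑ s ∈ Finset.univ.powersetCard k,
        (M.submatrix (Subtype.val : s → n) (Subtype.val : s → n)).det) *
          (-μ) ^ (Fintype.card n - k)) := by
    intro k hk
    have hk' : k ≤ Fintype.card n := by simpa [Nat.lt_succ_iff] using hk
    rw [Nat.add_sub_cancel, M.charpoly_coeff_eq_sum_minors k hk', neg_pow μ]
    have : (-1 : ℝ) ^ Fintype.card n = (-1) ^ k * (-1) ^ (Fintype.card n - k) := by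
      rw [← pow_add, Nat.add_sub_cancel' hk']
    rw [this]
    have h1 : ((-1 : ℝ) ^ (Fintype.card n - k)) * (-1) ^ (Fintype.card n - k) = 1 := by
      rw [← mul_pow]; simp
    linear_combination (-(-1) ^ k * (∑ s ∈ Finset.univ.powersetCard k,
        (M.submatrix (Subtype.val : s → n) (Subtype.val : s → n)).det) *
          μ ^ (Fintype.card n - k)) * h1
  rw [Finset.sum_congr rfl hterm, ← Finset.mul_sum] at hroot
  have hpos : 0 < ∑ k ∈ Finset.range (Fintype.card n + 1),
      ((∑ s ∈ Finset.univ.powersetCard k,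
        (M.submatrix (Subtype.val : s → n) (Subtype.val : s → n)).det) *
          (-μ) ^ (Fintype.card n - k)) := by
    refine Finset.sum_pos' (fun k _ => mul_nonneg (Finset.sum_nonneg fun s _ => h s)
      (pow_nonneg hμ.le _)) ⟨0, by simp, ?_⟩
    simpa using pow_pos hμ _
  exact hpos.ne' ((mul_eq_zero.mp hroot).resolve_left (pow_ne_zero _ (by norm_num)))

theorem hankelSub_det_add_nonneg {g : ℕ → ℝ} (hg : HankelTotallyPositive g) (m N : ℕ)
    (s : Finset (Fin N)) :
    0 ≤ ((Matrix.of fun i j : Fin N => g (m + i + j)).submatrix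
      (Subtype.val : s → Fin N) Subtype.val).det := by
  have h := hg s.card (fun i => m + (s.orderEmbOfFin rfl i : Fin N))
    (fun i => (s.orderEmbOfFin rfl i : Fin N))
    (fun i j hij => by
      have := (s.orderEmbOfFin rfl).strictMono hij
      simpa using this)
    (fun i j hij => by
      have := (s.orderEmbOfFin rfl).strictMono hij
      simpa using this)
  rw [← Matrix.det_submatrix_equiv_self (s.orderIsoOfFin rfl).toEquiv]
  exact h

open Polynomial

/-- The linear functional on real polynomials with moments `g`. -/
noncomputable def momentFunctional (g : ℕ → ℝ) : ℝ[X] →ₗ[ℝ] ℝ :=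
  (Polynomial.basisMonomials ℝ).constr ℝ g

theorem momentFunctional_X_pow (g : ℕ → ℝ) (n : ℕ) : momentFunctional g (X ^ n) = g n := by
  have h := (Polynomial.basisMonomials ℝ).constr_basis ℝ g n
  simpa only [coe_basisMonomials, monomial_one_right_eq_X_pow, momentFunctional] using h

theorem momentFunctional_X_pow_mul_mul (g : ℕ → ℝ) (m N : ℕ) (v w : Fin N → ℝ) :
    momentFunctional g (X ^ m * ((∑ i, C (v i) * X ^ (i : ℕ)) * ∑ j, C (w j) * X ^ (j : ℕ))) =
      v ⬝ᵥ (Matrix.of fun i j : Fin N => g (m + i + j)) *ᵥ w := by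
  rw [Finset.sum_mul_sum]
  simp only [Finset.mul_sum, map_sum, dotProduct, Matrix.mulVec]
  refine Finset.sum_congr rfl fun i _ => Finset.sum_congr rfl fun j _ => ?_
  have : (X : ℝ[X]) ^ m * (C (v i) * X ^ (i : ℕ) * (C (w j) * X ^ (j : ℕ))) =
      (v i * w j) • X ^ (m + i + j : ℕ) := by
    rw [smul_eq_C_mul, C_mul]; ring
  rw [this, map_smul, momentFunctional_X_pow, Matrix.of_apply, smul_eq_mul]
  ring

theorem momentFunctional_X_pow_mul_self_nonneg {g : ℕ → ℝ} (hg : HankelTotallyPositive g)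
    (m : ℕ) (p : ℝ[X]) : 0 ≤ momentFunctional g (X ^ m * (p * p)) := by
  have hp : p = ∑ i : Fin (p.natDegree + 1), C (p.coeff i) * X ^ (i : ℕ) := by
    conv_lhs => rw [p.as_sum_range_C_mul_X_pow]
    exact (Fin.sum_univ_eq_sum_range (fun i => C (p.coeff i) * X ^ i) _).symm
  rw [hp, momentFunctional_X_pow_mul_mul g m _ (fun i => p.coeff i) (fun i => p.coeff i)]
  have hH : (Matrix.of fun i j : Fin (p.natDegree + 1) => g (m + i + j)).PosSemidef := by
    refine Matrix.posSemidef_of_det_submatrix_nonneg ?_ (hankelSub_det_add_nonneg hg m _)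
    ext i j
    simp [add_right_comm]
  simpa using hH.dotProduct_mulVec_nonneg (fun i => p.coeff i)

/-- Cauchy-Schwarz, degenerate case. -/
theorem LinearMap.map_mul_eq_zero_of_map_mul_self_eq_zero {L : ℝ[X] →ₗ[ℝ] ℝ}
    (hL : ∀ p, 0 ≤ L (p * p)) {p : ℝ[X]} (hp : L (p * p) = 0) (q : ℝ[X]) : L (p * q) = 0 := by
  have key : ∀ t : ℝ, 0 ≤ 2 * t * L (p * q) + L (q * q) := by
    intro t
    have h := hL (t • p + q)
    have : (t • p + q) * (t • p + q) = (t * t) • (p * p) + (2 * t) • (p * q) + q * q := by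
      simp only [smul_eq_C_mul, C_mul, C_ofNat]; ring
    rw [this] at h
    simpa [hp] using h
  by_contra hne
  have h := key (-(L (q * q) + 1) / (2 * L (p * q)))
  have : 2 * (-(L (q * q) + 1) / (2 * L (p * q))) * L (p * q) = -(L (q * q) + 1) := by
    field_simp
  linarith

theorem exists_ne_zero_momentFunctional_mul_self_eq_zero {g : ℕ → ℝ} {N : ℕ}
    (h : (hankelSub g (fun i : Fin N => (i : ℕ)) (fun i => (i : ℕ))).rank < N) :
    ∃ p ≠ 0, momentFunctional g (p * p) = 0 := by
  set A := hankelSub g (fun i : Fin N => (i : ℕ)) (fun i => (i : ℕ)) with hA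
  have hdet : A.det = 0 := by
    by_contra hne
    have := Matrix.rank_of_isUnit A ((Matrix.isUnit_iff_isUnit_det A).mpr (isUnit_iff_ne_zero.mpr hne))
    simp at this
    lia
  obtain ⟨v, hv, hAv⟩ := Matrix.exists_mulVec_eq_zero_iff.mpr hdet
  refine ⟨∑ i, C (v i) * X ^ (i : ℕ), fun h0 => hv ?_, ?_⟩
  · ext i
    have := congrArg (fun p => p.coeff (i : ℕ)) h0
    simpa [finsetSum_coeff, coeff_C_mul, coeff_X_pow, Fin.val_inj] using this
  · have := momentFunctional_X_pow_mul_mul g 0 N v v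
    rw [pow_zero, one_mul] at this
    rw [this]
    have hA' : (Matrix.of fun i j : Fin N => g (0 + i + j)) = A := by
      ext i j; simp [hA, hankelSub]
    rw [hA', hAv, dotProduct_zero]

section MinimalIsotropic

variable {L : ℝ[X] →ₗ[ℝ] ℝ} {P : ℝ[X]}

theorem map_mul_self_pos_of_mul_eq (hL : ∀ p, 0 ≤ L (p * p)) (hP : P ≠ 0)
    (hmin : ∀ Q ≠ 0, L (Q * Q) = 0 → P.natDegree ≤ Q.natDegree) {A Q : ℝ[X]}
    (hA : 0 < A.natDegree) (h : P = A * Q) : 0 < L (Q * Q) := by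
  have hQ : Q ≠ 0 := by rintro rfl; simp [h] at hP
  have hA0 : A ≠ 0 := by rintro rfl; simp at hA
  refine lt_of_le_of_ne (hL Q) fun h0 => ?_
  have := hmin Q hQ h0.symm
  rw [h, natDegree_mul hA0 hQ] at this
  lia

theorem splits_of_minimal_isotropic (hL : ∀ p, 0 ≤ L (p * p)) (hP : P ≠ 0)
    (hPP : L (P * P) = 0)
    (hmin : ∀ Q ≠ 0, L (Q * Q) = 0 → P.natDegree ≤ Q.natDegree) : P.Splits := by
  obtain ⟨u, hu⟩ := UniqueFactorizationMonoid.factors_prod hP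
  rw [← hu]
  refine (Splits.multisetProd fun f hfac => Splits.of_degree_eq_one ?_).mul u.isUnit.splits
  have hf := UniqueFactorizationMonoid.irreducible_of_factor f hfac
  have hfP := UniqueFactorizationMonoid.dvd_of_mem_factors hfac
  obtain ⟨z, hz⟩ : ∃ z : ℂ, aeval z f = 0 :=
    IsAlgClosed.exists_aeval_eq_zero _ f (degree_pos_of_irreducible hf).ne'
  by_cases him : z.im = 0
  · refine degree_eq_one_of_irreducible_of_root (x := z.re) hf ?_
    have hz' : z = algebraMap ℝ ℂ z.re := by
      apply Complex.ext <;> simp [him]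
    rw [hz', aeval_algebraMap_apply] at hz
    simpa [IsRoot] using hz
  · exfalso
    obtain ⟨Q, hQ⟩ := (f.quadratic_dvd_of_aeval_eq_zero_im_ne_zero hz him).trans hfP
    have hdeg : (X ^ 2 - C (2 * z.re) * X + C (‖z‖ ^ 2)).natDegree = 2 := by compute_degree!
    have hpos := map_mul_self_pos_of_mul_eq hL hP hmin (by rw [hdeg]; norm_num) hQ
    have h0 := LinearMap.map_mul_eq_zero_of_map_mul_self_eq_zero hL hPP Q
    have hsq : P * Q = ((X - C z.re) * Q) * ((X - C z.re) * Q) + (z.im ^ 2) • (Q * Q) := by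
      rw [hQ, Complex.sq_norm, Complex.normSq_apply, smul_eq_C_mul]
      simp only [C_mul, C_add, C_pow, C_ofNat]
      ring
    rw [hsq, map_add, map_smul, smul_eq_mul] at h0
    have := hL ((X - C z.re) * Q)
    have := mul_pos (pow_pos (abs_pos.mpr him) 2) hpos
    rw [sq_abs] at this
    linarith

theorem nodup_roots_of_minimal_isotropic (hL : ∀ p, 0 ≤ L (p * p)) (hP : P ≠ 0)
    (hPP : L (P * P) = 0)
    (hmin : ∀ Q ≠ 0, L (Q * Q) = 0 → P.natDegree ≤ Q.natDegree) : P.roots.Nodup := by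
  rw [Multiset.nodup_iff_count_le_one]
  intro a
  by_contra! h
  rw [count_roots] at h
  obtain ⟨Q, hQ⟩ := (pow_dvd_pow _ h).trans (P.pow_rootMultiplicity_dvd a)
  have hQ' : P = (X - C a) * ((X - C a) * Q) := by rw [hQ]; ring
  have hpos := map_mul_self_pos_of_mul_eq hL hP hmin (by simp) hQ'
  have h0 := LinearMap.map_mul_eq_zero_of_map_mul_self_eq_zero hL hPP Q
  have : P * Q = ((X - C a) * Q) * ((X - C a) * Q) := by rw [hQ]; ring
  rw [this] at h0
  exact hpos.ne' h0

theorem roots_nonneg_of_minimal_isotropic (hL : ∀ p, 0 ≤ L (p * p))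
    (hLX : ∀ p, 0 ≤ L (X * (p * p))) (hP : P ≠ 0) (hPP : L (P * P) = 0)
    (hmin : ∀ Q ≠ 0, L (Q * Q) = 0 → P.natDegree ≤ Q.natDegree) {a : ℝ} (ha : P.IsRoot a) :
    0 ≤ a := by
  obtain ⟨Q, hQ⟩ := dvd_iff_isRoot.mpr ha
  have hpos := map_mul_self_pos_of_mul_eq hL hP hmin (by simp) hQ
  have h0 := LinearMap.map_mul_eq_zero_of_map_mul_self_eq_zero hL hPP Q
  have : P * Q = X * (Q * Q) - a • (Q * Q) := by rw [hQ, smul_eq_C_mul]; ring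
  rw [this, map_sub, map_smul, smul_eq_mul] at h0
  have := hLX Q
  by_contra! hneg
  have := mul_neg_of_neg_of_pos hneg hpos
  linarith

/-- Gauss quadrature for a positive semidefinite functional with nontrivial kernel. -/
theorem exists_quadrature (hL : ∀ p, 0 ≤ L (p * p))
    (hLX : ∀ p, 0 ≤ L (X * (p * p))) (h : ∃ p ≠ 0, L (p * p) = 0) :
    ∃ (S : Finset ℝ) (w : ℝ → ℝ), (∀ x ∈ S, 0 ≤ x ∧ 0 < w x) ∧
      ∀ p, L p = ∑ x ∈ S, w x * p.eval x := by
  obtain ⟨P, ⟨hP, hPP⟩, hmin'⟩ := exists_minimalFor_of_wellFoundedLT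
    (fun p : ℝ[X] => p ≠ 0 ∧ L (p * p) = 0) natDegree h
  have hmin : ∀ Q ≠ 0, L (Q * Q) = 0 → P.natDegree ≤ Q.natDegree := fun Q hQ hQQ =>
    (le_total P.natDegree Q.natDegree).elim id fun hle => hmin' ⟨hQ, hQQ⟩ hle
  have hzero := LinearMap.map_mul_eq_zero_of_map_mul_self_eq_zero hL hPP
  have hsplit := splits_of_minimal_isotropic hL hP hPP hmin
  have hnodup := nodup_roots_of_minimal_isotropic hL hP hPP hmin
  set S := P.roots.toFinset with hS
  have hcard : S.card = P.natDegree := by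
    rw [hS, Multiset.toFinset_card_of_nodup hnodup, splits_iff_card_roots.mp hsplit]
  have hvanish : ∀ q : ℝ[X], (∀ x ∈ S, q.eval x = 0) → L q = 0 := by
    intro q hq
    have hdvd : P ∣ q := by
      by_cases hq0 : q = 0
      · simp [hq0]
      · refine hsplit.dvd_of_roots_le_roots hP ((Multiset.le_iff_subset hnodup).mpr fun x hx => ?_)
        exact (mem_roots hq0).mpr (hq x (Multiset.mem_toFinset.mpr hx))
    obtain ⟨s, rfl⟩ := hdvd
    exact hzero s
  have hinj : Set.InjOn (id : ℝ → ℝ) S := Function.injective_id.injOn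
  have hquad : ∀ p, L p = ∑ x ∈ S, L (Lagrange.basis S id x) * p.eval x := by
    intro p
    have h0 := hvanish (p - Lagrange.interpolate S id (fun x => p.eval x)) fun x hx => by
      simpa [sub_eq_zero] using
        (Lagrange.eval_interpolate_at_node (fun x => p.eval x) hinj hx).symm
    rw [map_sub, sub_eq_zero] at h0
    rw [h0, Lagrange.interpolate_apply, map_sum]
    refine Finset.sum_congr rfl fun x _ => ?_
    rw [← smul_eq_C_mul, map_smul, smul_eq_mul, mul_comm]
  refine ⟨S, fun x => L (Lagrange.basis S id x), fun x hx => ⟨?_, ?_⟩, hquad⟩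
  · exact roots_nonneg_of_minimal_isotropic hL hLX hP hPP hmin
      (isRoot_of_mem_roots (Multiset.mem_toFinset.mp hx))
  · have hsq : L (Lagrange.basis S id x * Lagrange.basis S id x) = L (Lagrange.basis S id x) := by
      rw [hquad, Finset.sum_eq_single_of_mem x hx]
      · have := Lagrange.eval_basis_self hinj hx
        simp only [id] at this
        simp [this]
      · intro y hy hyx
        have := Lagrange.eval_basis_of_ne (v := (id : ℝ → ℝ)) hyx.symm hy
        simp only [id] at this
        simp [this]
    beta_reduce
    rw [← hsq]
    refine lt_of_le_of_ne (hL _) fun h0 => ?_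
    have hle := hmin _ (Lagrange.basis_ne_zero hinj hx) h0.symm
    have hdeg := natDegree_eq_of_degree_eq_some (Lagrange.degree_basis hinj hx)
    have := Finset.card_pos.mpr ⟨x, hx⟩
    lia

end MinimalIsotropic

theorem Polynomial.signVariations_add_one_le_card_support {p : ℝ[X]} (hp : p ≠ 0) :
    p.signVariations + 1 ≤ p.support.card := by
  induction hn : p.support.card using Nat.strong_induction_on generalizing p with
  | _ n ih =>
    have hcard := card_support_eraseLead_add_one hp
    by_cases h0 : p.eraseLead = 0
    · have := signVariations_eq_eraseLead_add_ite hp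
      simp [h0, hp] at this
      lia
    · have := ih _ (by lia) h0 rfl
      have := signVariations_le_eraseLead_succ p
      lia

open Filter in
/-- A polynomial with at most `n + 1` terms and positive leading coefficient that vanishes
at `n` positive points is positive beyond these points. -/
theorem Polynomial.eval_pos_of_card_support_le {n : ℕ} {q : ℝ[X]}
    (hlead : 0 < q.leadingCoeff) (hq : q.support.card ≤ n + 1) {T : Finset ℝ} (hT : T.card = n)
    (hroot : ∀ x ∈ T, 0 < x ∧ q.eval x = 0) {y : ℝ} (hy : 0 < y) (hTy : ∀ x ∈ T, x < y) :
    0 < q.eval y := by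
  have hq0 : q ≠ 0 := by rintro rfl; simp at hlead
  by_contra! hneg
  obtain ⟨z, hyz, hz⟩ : ∃ z, y ≤ z ∧ q.eval z = 0 := by
    by_cases hdeg : 0 < q.degree
    · have htend := q.tendsto_atTop_of_leadingCoeff_nonneg hdeg hlead.le
      obtain ⟨b, hb, hyb⟩ := ((htend.eventually_ge_atTop 0).and (eventually_ge_atTop y)).exists
      obtain ⟨z, hz, hqz⟩ := intermediate_value_Icc hyb q.continuous.continuousOn ⟨hneg, hb⟩
      exact ⟨z, hz.1, hqz⟩
    · rw [eq_C_of_degree_le_zero (not_lt.mp hdeg)] at hneg hlead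
      simp at hneg hlead
      linarith
  have hzT : z ∉ T := fun h => (hTy z h).not_ge hyz
  have hle : (insert z T).val ≤ q.roots.filter (0 < ·) := by
    rw [Multiset.le_iff_subset (insert z T).nodup]
    intro x hx
    rw [Finset.mem_val, Finset.mem_insert] at hx
    rw [Multiset.mem_filter, mem_roots hq0]
    rcases hx with rfl | hx
    · exact ⟨hz, hy.trans_le hyz⟩
    · exact ⟨(hroot x hx).2, (hroot x hx).1⟩
  have h1 := Multiset.card_le_card hle
  rw [← Multiset.countP_eq_card_filter, Finset.card_val, Finset.card_insert_of_notMem hzT] at h1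
  have h2 := q.roots_countP_pos_le_signVariations
  have h3 := signVariations_add_one_le_card_support hq0
  lia

/-- Generalized Vandermonde determinants with positive increasing nodes are positive. -/
theorem Matrix.det_of_pow_pos {n : ℕ} {x : Fin n → ℝ} {ρ : Fin n → ℕ} (hx : ∀ i, 0 < x i)
    (hmono : StrictMono x) (hρ : StrictMono ρ) :
    0 < (Matrix.of fun i j => x i ^ ρ j).det := by
  induction n with
  | zero => simp
  | succ n ih =>
    set A : Matrix (Fin (n + 1)) (Fin (n + 1)) ℝ := Matrix.of fun i j => x i ^ ρ j with hA
    set a : Fin (n + 1) → ℝ := fun j => (-1) ^ (n + j : ℕ) *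
      (A.submatrix (Fin.last n).succAbove j.succAbove).det with ha
    set q : ℝ[X] := ∑ j, C (a j) * X ^ ρ j with hq
    have heval : ∀ y, q.eval y = (A.updateRow (Fin.last n) fun j => y ^ ρ j).det := by
      intro y
      rw [Matrix.det_succ_row _ (Fin.last n), hq, eval_finsetSum]
      refine Finset.sum_congr rfl fun j _ => ?_
      simp only [Matrix.updateRow_self, Matrix.submatrix_updateRow_succAbove, Fin.val_last,
        eval_mul, eval_C, eval_pow, eval_X, ha]
      ring
    have hcoeff : q.coeff (ρ (Fin.last n)) = a (Fin.last n) := by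
      simp [hq, finsetSum_coeff, coeff_X_pow, hρ.injective.eq_iff]
    have hlast : 0 < a (Fin.last n) := by
      have := ih (x := x ∘ Fin.castSucc) (ρ := ρ ∘ Fin.castSucc) (fun i => hx _)
        (hmono.comp Fin.strictMono_castSucc) (hρ.comp Fin.strictMono_castSucc)
      have hsign : (-1 : ℝ) ^ (n + n) = 1 := Even.neg_one_pow ⟨n, rfl⟩
      simp only [ha, Fin.val_last, hsign, one_mul, Fin.succAbove_last]
      exact this
    have hdeg : q.natDegree = ρ (Fin.last n) := by
      refine le_antisymm (natDegree_sum_le_of_forall_le _ _ fun j _ => ?_)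
        (le_natDegree_of_ne_zero (hcoeff ▸ hlast.ne'))
      exact (natDegree_C_mul_X_pow_le _ _).trans (hρ.monotone (Fin.le_last j))
    have hsupp : q.support.card ≤ n + 1 := by
      have hsub : q.support ⊆ Finset.univ.image ρ := by
        intro k hk
        by_contra hnot
        simp only [Finset.mem_image, Finset.mem_univ, true_and, not_exists] at hnot
        refine mem_support_iff.mp hk ?_
        rw [hq, finsetSum_coeff]
        exact Finset.sum_eq_zero fun j _ => by
          rw [coeff_C_mul, coeff_X_pow, if_neg (Ne.symm (hnot j)), mul_zero]
      exact (Finset.card_le_card hsub).trans (Finset.card_image_le.trans (by simp))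
    have hpos := eval_pos_of_card_support_le (n := n) (q := q)
      (T := Finset.univ.image (x ∘ Fin.castSucc)) (y := x (Fin.last n))
      (by rwa [leadingCoeff, hdeg, hcoeff]) hsupp
      (by rw [Finset.card_image_of_injective _
            (hmono.comp Fin.strictMono_castSucc).injective, Finset.card_univ, Fintype.card_fin])
      (by
        intro y hy
        obtain ⟨i, -, rfl⟩ := Finset.mem_image.mp hy
        refine ⟨hx _, ?_⟩
        rw [heval]
        refine Matrix.det_zero_of_row_eq (Fin.castSucc_lt_last i).ne ?_
        rw [Matrix.updateRow_ne (Fin.castSucc_lt_last i).ne, Matrix.updateRow_self]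
        rfl)
      (hx _)
      (by
        intro y hy
        obtain ⟨i, -, rfl⟩ := Finset.mem_image.mp hy
        exact hmono (Fin.castSucc_lt_last i))
    rw [heval] at hpos
    have : A.updateRow (Fin.last n) (fun j => x (Fin.last n) ^ ρ j) = A :=
      Matrix.updateRow_eq_self A (Fin.last n)
    rwa [this] at hpos

theorem Matrix.det_of_pow_nonneg {n : ℕ} {x : Fin n → ℝ} {ρ : Fin n → ℕ} (hx : ∀ i, 0 ≤ x i)
    (hmono : StrictMono x) (hρ : StrictMono ρ) :
    0 ≤ (Matrix.of fun i j => x i ^ ρ j).det := by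
  have hcont : Continuous fun ε : ℝ => (Matrix.of fun i j => (x i + ε) ^ ρ j).det :=
    Continuous.matrix_det (continuous_matrix fun i j => by simp only [Matrix.of_apply]; fun_prop)
  have htend := (hcont.tendsto 0).mono_left (nhdsWithin_le_nhds (s := Set.Ioi 0))
  simp only [add_zero] at htend
  refine ge_of_tendsto htend (Filter.mem_of_superset self_mem_nhdsWithin fun ε hε => ?_)
  exact (Matrix.det_of_pow_pos (fun i => add_pos_of_nonneg_of_pos (hx i) hε)
    (fun i j hij => by simpa using hmono hij) hρ).le

/-- Two generalized Vandermonde determinants with the same nonnegative nodes have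
the same sign. -/
theorem Matrix.det_of_pow_mul_det_of_pow_nonneg {n : ℕ} {x : Fin n → ℝ} {ρ γ : Fin n → ℕ}
    (hx : ∀ i, 0 ≤ x i) (hρ : StrictMono ρ) (hγ : StrictMono γ) :
    0 ≤ (Matrix.of fun i j => x i ^ ρ j).det * (Matrix.of fun i j => x i ^ γ j).det := by
  by_cases hinj : Function.Injective x
  · have hmono : StrictMono (x ∘ Tuple.sort x) :=
      (Tuple.monotone_sort x).strictMono_of_injective (hinj.comp (Equiv.injective _))
    have h (κ : Fin n → ℕ) (hκ : StrictMono κ) :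
        0 ≤ (Equiv.Perm.sign (Tuple.sort x) : ℝ) * (Matrix.of fun i j => x i ^ κ j).det := by
      rw [← Matrix.det_permute]
      exact Matrix.det_of_pow_nonneg (x := x ∘ Tuple.sort x) (fun i => hx _) hmono hκ
    have hmul := mul_nonneg (h ρ hρ) (h γ hγ)
    have hsign : ((Equiv.Perm.sign (Tuple.sort x) : ℤ) : ℝ) *
        ((Equiv.Perm.sign (Tuple.sort x) : ℤ) : ℝ) = 1 := by
      rw [← Int.cast_mul, Int.units_coe_mul_self, Int.cast_one]
    rwa [mul_mul_mul_comm, hsign, one_mul] at hmul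
  · simp only [Function.Injective, not_forall] at hinj
    obtain ⟨i, j, hij, hne⟩ := hinj
    rw [Matrix.det_zero_of_row_eq hne (by ext k; simp [hij]), zero_mul]

/-- The discrete Andréief identity. -/
theorem Matrix.factorial_mul_det_sum {ι : Type*} [Fintype ι] [DecidableEq ι] {n : ℕ}
    (w : ι → ℝ) (u v : ι → Fin n → ℝ) :
    (n.factorial : ℝ) * (Matrix.of fun i j => ∑ k, w k * u k i * v k j).det =
      ∑ f : Fin n → ι, (∏ i, w (f i)) *
        ((Matrix.of fun i j => u (f i) j).det * (Matrix.of fun i j => v (f i) j).det) := by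
  have hdet : (Matrix.of fun i j => ∑ k, w k * u k i * v k j).det =
      ∑ f : Fin n → ι, (∏ i, w (f i)) * (∏ i, u (f i) i) *
        (Matrix.of fun i j => v (f i) j).det := by
    have hrows : (Matrix.of fun i j => ∑ k, w k * u k i * v k j) =
        fun i => ∑ k, (w k * u k i) • v k := by
      ext i j; simp
    have := (Matrix.detRowAlternating (R := ℝ) (n := Fin n)).toMultilinearMap.map_sum
      (fun i k => (w k * u k i) • v k)
    rw [hrows]
    refine this.trans (Finset.sum_congr rfl fun f _ => ?_)
    rw [MultilinearMap.map_smul_univ, Finset.prod_mul_distrib]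
    rfl
  have hperm : ∀ σ : Equiv.Perm (Fin n), (Matrix.of fun i j => ∑ k, w k * u k i * v k j).det =
      ∑ f : Fin n → ι, (∏ i, w (f i)) * ((Equiv.Perm.sign σ * ∏ i, u (f (σ i)) i) *
        (Matrix.of fun i j => v (f i) j).det) := by
    intro σ
    rw [hdet, ← (Equiv.arrowCongr σ.symm (Equiv.refl ι)).sum_comp]
    refine Finset.sum_congr rfl fun f _ => ?_
    have hv : (Matrix.of fun i j => v (f (σ i)) j).det =
        Equiv.Perm.sign σ * (Matrix.of fun i j => v (f i) j).det := by
      rw [← Matrix.det_permute]; rfl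
    have hw : ∏ i, w (f (σ i)) = ∏ i, w (f i) := Equiv.prod_comp σ fun i => w (f i)
    simp only [Equiv.arrowCongr_apply, Equiv.coe_refl, Equiv.symm_symm, Function.comp_apply, id,
      hv, hw]
    ring
  calc _ = ∑ σ : Equiv.Perm (Fin n), (Matrix.of fun i j => ∑ k, w k * u k i * v k j).det := by
        rw [Finset.sum_const, Finset.card_univ, Fintype.card_perm, Fintype.card_fin, nsmul_eq_mul]
    _ = _ := by
        rw [Finset.sum_congr rfl fun σ _ => hperm σ, Finset.sum_comm]
        refine Finset.sum_congr rfl fun f _ => ?_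
        rw [← Finset.mul_sum, ← Finset.sum_mul, Matrix.det_apply' (Matrix.of fun i j => u (f i) j)]
        rfl

theorem hankelTotallyPositive_of_sum_pow {m : ℕ} {g : ℕ → ℝ} {c lam : Fin m → ℝ}
    (hc : ∀ i, 0 < c i) (hlam : ∀ i, 0 ≤ lam i) (hg : ∀ t, g t = ∑ i, c i * lam i ^ t) :
    HankelTotallyPositive g := by
  intro p ρ γ hρ hγ
  have hsub : hankelSub g ρ γ =
      Matrix.of fun i j => ∑ k, c k * lam k ^ ρ i * lam k ^ γ j := by
    ext i j
    simp [hankelSub, hg, pow_add, mul_assoc]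
  have h := Matrix.factorial_mul_det_sum c (fun k i => lam k ^ ρ i) (fun k j => lam k ^ γ j)
  rw [← hsub] at h
  refine nonneg_of_mul_nonneg_right (h ▸ Finset.sum_nonneg fun f _ => ?_)
    (Nat.cast_pos.mpr p.factorial_pos)
  exact mul_nonneg (Finset.prod_nonneg fun i _ => (hc _).le)
    (Matrix.det_of_pow_mul_det_of_pow_nonneg (x := lam ∘ f) (fun i => hlam _) hρ hγ)

theorem hankelSub_eq_mul {m p : ℕ} {g : ℕ → ℝ} {c lam : Fin m → ℝ}
    (hg : ∀ t, g t = ∑ i, c i * lam i ^ t) (ρ γ : Fin p → ℕ) :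
    hankelSub g ρ γ = (Matrix.of fun i k => lam k ^ ρ i) *
      (Matrix.diagonal c * Matrix.of fun k j => lam k ^ γ j) := by
  ext i j
  rw [Matrix.mul_apply]
  simp only [hankelSub, hg, Matrix.of_apply, Matrix.diagonal_mul, pow_add]
  exact Finset.sum_congr rfl fun k _ => by ring

theorem HankelRankEq.eq_of_sum_pow {m r : ℕ} {g : ℕ → ℝ} {c lam : Fin m → ℝ}
    (h : HankelRankEq g r) (hc : ∀ i, 0 < c i) (hlam : Function.Injective lam)
    (hg : ∀ t, g t = ∑ i, c i * lam i ^ t) : m = r := by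
  refine le_antisymm ?_ ?_
  · have hle := h.1 m (fun i => i) (fun i => i)
    have hV : (Matrix.vandermonde lam).det ≠ 0 := Matrix.det_vandermonde_ne_zero_iff.mpr hlam
    have hdet : (hankelSub g (fun i : Fin m => (i : ℕ)) fun i => (i : ℕ)).det ≠ 0 := by
      rw [hankelSub_eq_mul hg, Matrix.det_mul, Matrix.det_mul, Matrix.det_diagonal]
      refine mul_ne_zero ?_ (mul_ne_zero (Finset.prod_pos fun i _ => hc i).ne' hV)
      rw [← Matrix.det_transpose]
      exact hV
    rwa [Matrix.rank_of_isUnit _ ((Matrix.isUnit_iff_isUnit_det _).mpr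
      (isUnit_iff_ne_zero.mpr hdet)), Fintype.card_fin] at hle
  · obtain ⟨ρ, γ, hr⟩ := h.2
    rw [← hr, hankelSub_eq_mul hg]
    exact (Matrix.rank_mul_le_left _ _).trans (Matrix.rank_le_width _)

/-- A Hankel matrix of finite rank `r ≥ 1` is totally positive if and only if
`g(t) = ∑_{i=1}^r c_i λ_i^{t-1}` with `c_i > 0` and `λ_1 > … > λ_r ≥ 0`
(here `g t` stands for `g(t+1)`, whence the exponent `t`). -/
theorem hankel_totally_positive_iff_sum_of_decaying_exponentials
    (g : ℕ → ℝ) (r : ℕ) (hr : 1 ≤ r) (hrank : HankelRankEq g r) :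
    HankelTotallyPositive g ↔
      ∃ c lam : Fin r → ℝ, (∀ i, 0 < c i) ∧ StrictAnti lam ∧ (∀ i, 0 ≤ lam i) ∧
        ∀ t : ℕ, g t = ∑ i, c i * lam i ^ t := by
  refine ⟨fun hg => ?_, fun ⟨c, lam, hc, _, hlam, hsum⟩ =>
    hankelTotallyPositive_of_sum_pow hc hlam hsum⟩
  obtain ⟨S, w, hS, hquad⟩ := exists_quadrature
    (fun p => by simpa using momentFunctional_X_pow_mul_self_nonneg hg 0 p)
    (fun p => by simpa using momentFunctional_X_pow_mul_self_nonneg hg 1 p)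
    (exists_ne_zero_momentFunctional_mul_self_eq_zero
      ((hrank.1 (r + 1) (fun i => i) fun i => i).trans_lt r.lt_succ_self))
  set lam : Fin S.card → ℝ := fun i => S.orderEmbOfFin rfl i.rev with hlam_def
  have hmem : ∀ i, lam i ∈ S := fun i => S.orderEmbOfFin_mem rfl _
  have hanti : StrictAnti lam := (S.orderEmbOfFin rfl).strictMono.comp_strictAnti Fin.rev_strictAnti
  have hsum : ∀ t, g t = ∑ i, w (lam i) * lam i ^ t := by
    intro t
    rw [← momentFunctional_X_pow g, hquad]
    simp only [eval_pow, eval_X]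
    refine (Finset.sum_nbij lam (fun i _ => hmem i) hanti.injective.injOn ?_ fun _ _ => rfl).symm
    exact Finset.surjOn_of_injOn_of_card_le lam (fun i _ => hmem i) hanti.injective.injOn (by simp)
  obtain rfl := hrank.eq_of_sum_pow (fun i => (hS _ (hmem i)).2) hanti.injective hsum
  exact ⟨fun i => w (lam i), lam, fun i => (hS _ (hmem i)).2, hanti,
    fun i => (hS _ (hmem i)).1, hsum⟩
end
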